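/- If a and b are linked by I over M, then Supp Hom_R(R/a, M/IM) = Supp(M/aM). -/

import Mathlib

open RingTheory.Sequence

/-- The colon submodule `N :_M a = {m ∈ M | a m ⊆ N}`. -/
def Submodule.colonBy {R M : Type*} [CommRing R] [AddCommGroup M] [Module R M]
    (N : Submodule R M) (a : Ideal R) : Submodule R M :=
  ⨅ r ∈ a, N.comap (LinearMap.lsmul R M r)
/-- `a` and `b` are linked by `I` over `M`: `I ⊆ a ∩ b` is generated by an `M`-regular
sequence, `aM ≠ M ≠ bM`, `IM :_M a = bM` and `IM :_M b = aM`. -/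
def Ideal.LinkedBy (R M : Type*) [CommRing R] [AddCommGroup M] [Module R M]
    (a b I : Ideal R) : Prop :=
  I ≤ a ⊓ b ∧
  (∃ rs : List R, I = Ideal.ofList rs ∧ RingTheory.Sequence.IsRegular M rs) ∧
  a • (⊤ : Submodule R M) ≠ ⊤ ∧ b • (⊤ : Submodule R M) ≠ ⊤ ∧
  (I • ⊤ : Submodule R M).colonBy a = b • (⊤ : Submodule R M) ∧
  (I • ⊤ : Submodule R M).colonBy b = a • (⊤ : Submodule R M)

/-!
Evaluation at `1` identifies `Hom_R(R/a, M/IM)` with the `a`-torsion of `M/IM`, which is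
`(IM :_M a)/IM`. Being killed by `a` and contained in a quotient of `M`, it is supported on
`V(a) ∩ Supp M = Supp (M/aM)`. Conversely it contains the image of `bM`, and whatever kills that
image maps `M` into `IM :_M b = aM`. The image of `bM` is finitely generated, so its support is the
zero locus of its annihilator, which contains `Supp (M/aM)`.
-/

section

variable {R M : Type*} [CommRing R] [AddCommGroup M] [Module R M]

open Submodule

theorem mem_colonBy {N : Submodule R M} {a : Ideal R} {m : M} :
    m ∈ N.colonBy a ↔ ∀ r ∈ a, r • m ∈ N := by
  simp only [colonBy, mem_iInf, mem_comap, LinearMap.lsmul_apply]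

theorem map_mkQ_colonBy (N : Submodule R M) (a : Ideal R) :
    (N.colonBy a).map N.mkQ = torsionBySet R (M ⧸ N) a := by
  have comap_torsion : (torsionBySet R (M ⧸ N) a).comap N.mkQ = N.colonBy a := by
    ext m
    simp only [mem_comap, mem_torsionBySet_iff, mem_colonBy, Subtype.forall, SetLike.mem_coe,
      mkQ_apply, ← Quotient.mk_smul, Quotient.mk_eq_zero]
  rw [← comap_torsion, map_comap_eq_of_surjective N.mkQ_surjective]

variable (M) in
/-- Evaluation at `1` identifies `Hom_R(R/a, M)` with the submodule of elements of `M` killed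
by `a`. -/
def homQuotientEquivTorsionBySet (a : Ideal R) :
    ((R ⧸ a) →ₗ[R] M) ≃ₗ[R] torsionBySet R M a where
  toFun f := ⟨f 1, (mem_torsionBySet_iff _ _).mpr fun r => by
    rw [← map_smul, Algebra.smul_def, mul_one, Ideal.Quotient.algebraMap_eq,
      Ideal.Quotient.eq_zero_iff_mem.mpr r.2, map_zero]⟩
  invFun x := a.liftQ (LinearMap.toSpanSingleton R M x) fun r hr =>
    (mem_torsionBySet_iff _ _).mp x.2 ⟨r, hr⟩
  map_add' _ _ := rfl
  map_smul' _ _ := rfl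
  left_inv f := linearMap_qext a <| LinearMap.ext_ring <| one_smul R (f 1)
  right_inv x := Subtype.ext <| one_smul R (x : M)

theorem support_torsionBySet_subset (a : Ideal R) :
    Module.support R (torsionBySet R M a) ⊆
      Module.support R M ∩ PrimeSpectrum.zeroLocus (a : Set R) := by
  have le_annihilator : (a : Set R) ⊆ Module.annihilator R (torsionBySet R M a) :=
    (Module.isTorsionBySet_iff_subset_annihilator _ _).mp (torsionBySet_isTorsionBySet _)
  exact fun p hp => ⟨Module.support_subset_of_injective _ (subtype_injective _) hp,
    le_annihilator.trans (Module.annihilator_le_of_mem_support hp)⟩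

theorem colon_smul_top_le_colon_univ {N L : Submodule R M} {b : Ideal R}
    (hL : N.colonBy b ≤ L) : N.colon (b • ⊤ : Submodule R M) ≤ L.colon Set.univ := by
  refine fun s hs => mem_colon.mpr fun m _ => hL (mem_colonBy.mpr fun t ht => ?_)
  rw [smul_comm]
  exact mem_colon.mp hs _ (smul_mem_smul ht mem_top)

theorem support_quotient_subset_support_map_mkQ {N L : Submodule R M} {b : Ideal R}
    (hfg : (b • ⊤ : Submodule R M).FG) (hL : N.colonBy b ≤ L) :
    Module.support R (M ⧸ L) ⊆
      Module.support R ((b • ⊤ : Submodule R M).map N.mkQ) := by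
  have := Module.Finite.of_fg (hfg.map N.mkQ)
  intro p hp
  rw [Module.support_eq_zeroLocus]
  calc Module.annihilator R ((b • ⊤ : Submodule R M).map N.mkQ)
      = N.colon (b • ⊤ : Submodule R M) := annihilator_map_mkQ_eq_colon
    _ ≤ L.colon Set.univ := colon_smul_top_le_colon_univ hL
    _ = Module.annihilator R (M ⧸ L) := annihilator_quotient.symm
    _ ≤ p.asIdeal := Module.annihilator_le_of_mem_support hp

theorem support_hom_eq_of_linked_general [Module.Finite R M] {a b : Ideal R}
    {N : Submodule R M} (hfg : (b • ⊤ : Submodule R M).FG)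
    (hb : b • ⊤ ≤ N.colonBy a) (ha : N.colonBy b ≤ a • ⊤) :
    Module.support R ((R ⧸ a) →ₗ[R] (M ⧸ N)) =
      Module.support R (M ⧸ (a • ⊤ : Submodule R M)) := by
  rw [(homQuotientEquivTorsionBySet (M ⧸ N) a).support_eq]
  apply Set.Subset.antisymm
  · rw [Module.support_quotient]
    exact (support_torsionBySet_subset a).trans <| Set.inter_subset_inter_left _ <|
      Module.support_subset_of_surjective _ N.mkQ_surjective
  · have map_le_torsion : (b • ⊤ : Submodule R M).map N.mkQ ≤ torsionBySet R (M ⧸ N) a :=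
      (map_mono hb).trans_eq (map_mkQ_colonBy N a)
    exact (support_quotient_subset_support_map_mkQ hfg ha).trans <|
      Module.support_subset_of_injective _ (inclusion_injective map_le_torsion)

end

/-- If `a` and `b` are linked by `I` over `M`, then
`Supp Hom_R(R/a, M/IM) = Supp (M/aM)`. -/
theorem support_hom_eq_of_linked {R M : Type*} [CommRing R] [IsNoetherianRing R]
    [AddCommGroup M] [Module R M] [Module.Finite R M]
    (a b I : Ideal R) (h : Ideal.LinkedBy R M a b I) :
    Module.support R ((R ⧸ a) →ₗ[R] (M ⧸ (I • ⊤ : Submodule R M))) =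
      Module.support R (M ⧸ (a • ⊤ : Submodule R M)) := by
  obtain ⟨-, -, -, -, hb, ha⟩ := h
  exact support_hom_eq_of_linked_general (IsNoetherian.noetherian _) hb.ge ha.le
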